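/- Let k ≥ 2 and let λ ⊢ kp be a partition with empty k-core and k-quotient quot_k(λ) = (λ_1,…,λ_k). If each λ_i is either the empty partition or has exactly one (nonzero) part, then Σ_{μ ⊢ p} (1/z_μ) · χ^λ_{kμ} = sign(π_λ); if some λ_i has at least two nonzero parts, then Σ_{μ ⊢ p} (1/z_μ) · χ^λ_{kμ} = 0. -/

import Mathlib

open scoped BigOperators

namespace RimHookPaper

/-- A partition: a weakly decreasing, eventually-zero sequence of naturals;
`parts n` is the `(n+1)`-st part. -/
structure Partition : Type where
  parts : ℕ → ℕ
  antitone : ∀ ⦃i j : ℕ⦄, i ≤ j → parts j ≤ parts i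
  eventually_zero : ∃ N : ℕ, ∀ i : ℕ, N ≤ i → parts i = 0

namespace Partition

/-- The size `|λ|` of a partition. -/
noncomputable def size (P : Partition) : ℕ := ∑ᶠ i, P.parts i

/-- The empty partition. -/
def empty : Partition := ⟨fun _ => 0, fun _ _ _ => le_rfl, ⟨0, fun _ _ => rfl⟩⟩

/-- The number of nonzero parts of a partition. -/
noncomputable def length (P : Partition) : ℕ := sInf {N | P.parts N = 0}

/-- The cells of the Young diagram of a partition. -/
def cells (P : Partition) : Set (ℕ × ℕ) := {c | c.2 < P.parts c.1}

instance : LE Partition := ⟨fun Q P => ∀ i, Q.parts i ≤ P.parts i⟩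

/-- The skew shape `P / Q` (as a set of cells). -/
def skew (P Q : Partition) : Set (ℕ × ℕ) := P.cells \ Q.cells

end Partition

/-- Edge-adjacency of cells. -/
def Adj (c d : ℕ × ℕ) : Prop :=
  (c.1 = d.1 ∧ (c.2 + 1 = d.2 ∨ d.2 + 1 = c.2)) ∨
    (c.2 = d.2 ∧ (c.1 + 1 = d.1 ∨ d.1 + 1 = c.1))

/-- A set of cells is (edge-)connected. -/
def IsConnectedSet (S : Set (ℕ × ℕ)) : Prop :=
  ∀ c ∈ S, ∀ d ∈ S, Relation.ReflTransGen (fun x y => x ∈ S ∧ y ∈ S ∧ Adj x y) c d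

/-- `S` contains no 2×2 square. -/
def NoSquare (S : Set (ℕ × ℕ)) : Prop :=
  ¬ ∃ i j : ℕ, (i, j) ∈ S ∧ (i + 1, j) ∈ S ∧ (i, j + 1) ∈ S ∧ (i + 1, j + 1) ∈ S

/-- `P / Q` is a rim hook (border strip) of length `t`: a nonempty connected skew
shape with no 2×2 square, consisting of `t` boxes. -/
def IsRimHook (P Q : Partition) (t : ℕ) : Prop :=
  Q ≤ P ∧ (P.skew Q).Nonempty ∧ IsConnectedSet (P.skew Q) ∧ NoSquare (P.skew Q) ∧
    (P.skew Q).ncard = t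

/-- One step of a rim hook tableau: an empty hook (`t = 0`) or a rim hook of length `t`. -/
def IsStep (P Q : Partition) (t : ℕ) : Prop :=
  (t = 0 ∧ P = Q) ∨ (0 < t ∧ IsRimHook P Q t)

/-- Number of rows met by a set of cells. -/
noncomputable def rowCount (S : Set (ℕ × ℕ)) : ℕ := (Prod.fst '' S).ncard

/-- A rim hook tableau of shape `P` and type `μ`: a chain
`∅ = λ⁰ ⊆ λ¹ ⊆ ⋯ ⊆ λʳ = P` with each `λⁱ/λⁱ⁻¹` a (possibly empty)
rim hook of length `μᵢ`. -/
structure RHT (P : Partition) (μ : List ℕ) : Type where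
  chain : Fin (μ.length + 1) → Partition
  chain_zero : chain 0 = Partition.empty
  chain_last : chain (Fin.last μ.length) = P
  step : ∀ j : Fin μ.length, IsStep (chain j.succ) (chain j.castSucc) (μ.get j)

/-- The total height of a rim hook tableau: the sum of the heights
(number of rows minus one) of its nonempty rim hooks. -/
noncomputable def RHT.height {P : Partition} {μ : List ℕ} (T : RHT P μ) : ℕ :=
  ∑ j : Fin μ.length, (rowCount ((T.chain j.succ).skew (T.chain j.castSucc)) - 1)

/-- The character value `χ^λ_μ` of the symmetric group, via the
Murnaghan–Nakayama rule. -/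
noncomputable def chiAux (P : Partition) (μ : List ℕ) : ℤ :=
  ∑ᶠ T : RHT P μ, (-1 : ℤ) ^ T.height

/-- The parts of a multiset, listed in weakly decreasing order. -/
def typeList (μ : Multiset ℕ) : List ℕ := (μ.sort (· ≤ ·)).reverse

/-- `χ^λ_μ` for a multiset type `μ`. -/
noncomputable def chi (P : Partition) (μ : Multiset ℕ) : ℤ := chiAux P (typeList μ)

/-- `z_μ = ∏_j m_j! · j^{m_j}` where `μ` has `m_j` parts equal to `j`. -/
def zpart (μ : Multiset ℕ) : ℕ := μ.prod * ∏ j ∈ μ.toFinset, (μ.count j).factorial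

/-- `χ^λ(σ)`: the character evaluated at a permutation, via its full cycle type
(including fixed points as parts equal to 1). -/
noncomputable def chiPerm (P : Partition) {m : ℕ} (σ : Equiv.Perm (Fin m)) : ℤ :=
  chi P (σ.cycleType + Multiset.replicate (m - σ.cycleType.sum) 1)

/-- Position of the zero (up step) corresponding to row `n` in the 0/1 sequence
`s(P)`, where the median of `s(P)` is the gap just below position `0`. -/
def zpos (P : Partition) (n : ℕ) : ℤ := (P.parts n : ℤ) - (n : ℤ) - 1

/-- `s(P)` has a `0` (an up step) at position `x`; otherwise it has a `1`. -/
def isZeroAt (P : Partition) (x : ℤ) : Prop := ∃ n : ℕ, zpos P n = x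

/-- `Q` is the `k`-quotient of `P`: for each residue `i`, the 0/1 sequence of `Q i`
is (up to the shift `d` recording the position of its median) the subsequence of
`s(P)` consisting of every `k`-th digit, including the `(i+1)`-st digit after the
median of `s(P)`. -/
def IsKQuotient (k : ℕ) (P : Partition) (Q : Fin k → Partition) : Prop :=
  ∀ i : Fin k, ∃ d : ℤ, ∀ j : ℤ,
    isZeroAt (Q i) j ↔ isZeroAt P (((i : ℕ) : ℤ) + (j + d) * (k : ℤ))

/-- `C` is the `k`-core of `P`: it is obtained from `P` by successively removing
rim hooks of length `k`, as long as possible. -/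
def IsKCore (k : ℕ) (P C : Partition) : Prop :=
  Relation.ReflTransGen (fun A B => IsRimHook A B k) P C ∧ ¬ ∃ C', IsRimHook C C' k

/-- The map on row indices induced by moving the zero in row `m` down (left)
to row `m'`, the zeros in rows `m+1,…,m'` each moving up one row. -/
def cycleFun (m m' n : ℕ) : ℕ :=
  if n = m then m' else if m < n ∧ n ≤ m' then n - 1 else n

/-- One tracking step for the zero permutation: passing from `A` to `B` by removing
a rim hook, encoded on the 0/1 sequence as interchanging a `1` with a later `0`
(the moved zero, in row `m` of `A`, jumps over `m' - m` zeros, landing in row `m'`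
of `B`); the row of each labeled zero is updated by `cycleFun m m'`. -/
def StepTrack (A B : Partition) (f g : ℕ → ℕ) : Prop :=
  (A = B ∧ g = f) ∨
    ∃ m m' : ℕ, m ≤ m' ∧
      (∀ n, n < m → zpos B n = zpos A n) ∧
      (∀ n, m ≤ n → n < m' → zpos B n = zpos A (n + 1)) ∧
      (∀ n, m' < n → zpos B n = zpos A n) ∧
      g = fun i => cycleFun m m' (f i)

/-- `π` is the zero permutation of the rim hook tableau `T`: label the zeros of
`s(P)` succeeding the first one by `1,…,ℓ(P)` from left to right (`q j i` is the
row of label `i+1` at stage `j` of the peeling, rows counted from the top), peel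
the rim hooks of `T` in order of decreasing entries, and read off the labels in
the final sequence `s(∅)` from left to right. -/
def IsZeroPerm {P : Partition} {μ : List ℕ} (T : RHT P μ)
    (π : Equiv.Perm (Fin P.length)) : Prop :=
  ∃ q : Fin (μ.length + 1) → ℕ → ℕ,
    (∀ i : ℕ, i < P.length → q (Fin.last μ.length) i = P.length - 1 - i) ∧
    (∀ j : Fin μ.length,
      StepTrack (T.chain j.succ) (T.chain j.castSucc) (q j.succ) (q j.castSucc)) ∧
    (∀ i : Fin P.length, q 0 ((π i : ℕ)) = P.length - 1 - (i : ℕ))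

/-- `ω(T) = (T₁,…,T_k)`: the rim hook tableau `T` (all of whose hook lengths are
divisible by `k`) decomposes into the `k`-tuple of rim hook tableaux `Ti` on the
`k`-quotient: each step of `T`, removing a hook of length `k·t`, affects exactly
one subsequence (mod `k`) of the 0/1 sequence, i.e. removes a hook of length `t`
from exactly one of the quotient partitions. -/
def OmegaRel (k : ℕ) {P : Partition} {κ : List ℕ} (T : RHT P κ)
    {Q : Fin k → Partition} {ν : Fin k → List ℕ}
    (Ti : ∀ i : Fin k, RHT (Q i) (ν i)) : Prop :=
  ∃ (QC : Fin (κ.length + 1) → Fin k → Partition) (a : Fin κ.length → Fin k),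
    (∀ j, IsKQuotient k (T.chain j) (QC j)) ∧
    (∀ j : Fin κ.length, ∀ i, i ≠ a j → QC j.castSucc i = QC j.succ i) ∧
    (∀ j : Fin κ.length, ∃ t : ℕ, κ.get j = k * t ∧
      IsStep (QC j.succ (a j)) (QC j.castSucc (a j)) t) ∧
    (∀ i : Fin k, ∃ e : Fin (ν i).length → Fin κ.length,
      StrictMono e ∧ (∀ s, a (e s) = i) ∧ (∀ j, a j = i → ∃ s, e s = j) ∧
      (∀ s, k * (ν i).get s = κ.get (e s)) ∧
      (Ti i).chain 0 = QC 0 i ∧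
      (∀ s : Fin (ν i).length, (Ti i).chain s.succ = QC (Fin.succ (e s)) i))


/-- The bead move. -/
def MoveEq (A B : Partition) (m m' : ℕ) : Prop :=
  m ≤ m' ∧
      (∀ n, n < m → zpos B n = zpos A n) ∧
      (∀ n, m ≤ n → n < m' → zpos B n = zpos A (n + 1)) ∧
      (∀ n, m' < n → zpos B n = zpos A n)

def Move (A B : Partition) (m m' t : ℕ) : Prop :=
  MoveEq A B m m' ∧ zpos B m' = zpos A m - t

lemma zpos_lt (A : Partition) {i j : ℕ} (h : i < j) : zpos A j < zpos A i := by
  have := A.antitone h.le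
  unfold zpos; omega

lemma zpos_inj (A : Partition) {i j : ℕ} (h : zpos A i = zpos A j) : i = j := by
  rcases lt_trichotomy i j with h1 | h1 | h1
  · have := zpos_lt A h1; omega
  · exact h1
  · have := zpos_lt A h1; omega

lemma Partition.ext' {A B : Partition} (h : ∀ n, zpos A n = zpos B n) : A = B := by
  cases A with | mk a ha ha' => cases B with | mk b hb hb' =>
  have : a = b := by
    funext n
    have := h n
    simp only [zpos] at this
    omega
  subst this
  rfl

lemma Move.pos_lt {A B : Partition} {m m' t : ℕ} (ht : 0 < t) (h : Move A B m m' t) :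
    ∀ n, m ≤ n → n ≤ m' → zpos B n < zpos A n := by
  obtain ⟨⟨h0, h1, h2, h3⟩, h4⟩ := h
  intro n hn hn'
  rcases lt_or_eq_of_le hn' with h5 | h5
  · rw [h2 n hn h5]; exact zpos_lt A (by omega)
  · subst h5
    rcases lt_or_eq_of_le h0 with h6 | h6
    · have := h2 (n-1) (by omega) (by omega)
      have h7 := zpos_lt B (show n - 1 < n by omega)
      rw [this, show n - 1 + 1 = n by omega] at h7
      exact h7
    · subst h6; omega

lemma Move.le {A B : Partition} {m m' t : ℕ} (ht : 0 < t) (h : Move A B m m' t) : B ≤ A := by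
  intro n
  have h1 := h.pos_lt ht n
  obtain ⟨⟨h0, h1', h2, h3⟩, h4⟩ := h
  by_cases ha : n < m
  · have := h1' n ha; unfold zpos at this; omega
  · by_cases hb : m' < n
    · have := h3 n hb; unfold zpos at this; omega
    · have := h1 (by omega) (by omega); unfold zpos at this; omega

/-- sum of the differences -/
lemma MoveEq.sum {A B : Partition} {m m' : ℕ} (h : MoveEq A B m m') (M : ℕ) (hM : m' < M) :
    ∑ n ∈ Finset.range M, (zpos A n - zpos B n) = zpos A m - zpos B m' := by
  obtain ⟨h0, h1, h2, h3⟩ := h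
  induction M, hM using Nat.le_induction with
  | base =>
    have key : ∀ j, j < m' + 1 → m ≤ j →
      ∑ n ∈ Finset.range j, (zpos A n - zpos B n) = zpos A m - zpos A j := by
      intro j hj hmj
      induction j, hmj using Nat.le_induction with
      | base =>
        rw [sub_self]
        apply Finset.sum_eq_zero
        intro i hi
        rw [h1 i (by simpa using hi)]; ring
      | succ j hmj ih =>
        rw [Finset.sum_range_succ, ih (by omega), h2 j hmj (by omega)]; ring
    rw [Nat.succ_eq_add_one, Finset.sum_range_succ, key m' (by omega) h0]; ring
  | succ M hM ih =>
    rw [Finset.sum_range_succ, ih, h3 M (by omega)]; ring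

lemma skew_ncard {A B : Partition} (h : B ≤ A) (M : ℕ) (hM : A.parts M = 0) :
    (A.skew B).ncard = ∑ n ∈ Finset.range M, (A.parts n - B.parts n) := by
  have : A.skew B = ↑((Finset.range M).sigma (fun n => Finset.Ico (B.parts n) (A.parts n)) |>.map
      ⟨fun x : (_ : ℕ) × ℕ => (x.1, x.2), by rintro ⟨a, b⟩ ⟨c, d⟩ h; simp at h; simp [h]⟩) := by
    ext ⟨a, b⟩
    simp only [Partition.skew, Partition.cells, Set.mem_sdiff, Set.mem_ofPred_eq, Finset.coe_map,
      Function.Embedding.coeFn_mk, Set.mem_image, Finset.mem_coe, Finset.mem_sigma,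
      Finset.mem_range, Finset.mem_Ico, Prod.mk.injEq, Sigma.exists, not_lt]
    constructor
    · rintro ⟨h1, h2⟩
      refine ⟨a, b, ⟨?_, h2, h1⟩, rfl⟩
      by_contra h3
      have := A.antitone (not_lt.mp h3)
      omega
    · rintro ⟨a', b', ⟨h1, h2, h3⟩, h4⟩
      obtain ⟨rfl, rfl⟩ := Prod.mk.inj h4
      exact ⟨h3, h2⟩
  rw [this, Set.ncard_coe_finset, Finset.card_map, Finset.card_sigma]
  simp

lemma MoveEq.ncard {A B : Partition} (hle : B ≤ A) {m m' : ℕ} (h : MoveEq A B m m') :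
    ((A.skew B).ncard : ℤ) = zpos A m - zpos B m' := by
  obtain ⟨M, hM⟩ := A.eventually_zero
  rw [← h.sum (M + m' + 1) (by omega), skew_ncard hle (M + m' + 1) (hM _ (by omega))]
  push_cast
  apply Finset.sum_congr rfl
  intro n _
  have := hle n
  unfold zpos
  omega

lemma mem_skew {A B : Partition} {c : ℕ × ℕ} :
    c ∈ A.skew B ↔ B.parts c.1 ≤ c.2 ∧ c.2 < A.parts c.1 := by
  simp [Partition.skew, Partition.cells, and_comm]

lemma cross {S : Set (ℕ × ℕ)} {c d : ℕ × ℕ} (n : ℕ)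
    (h : Relation.ReflTransGen (fun x y => x ∈ S ∧ y ∈ S ∧ Adj x y) c d)
    (hc : c.1 ≤ n) : d.1 ≤ n ∨ ∃ j, (n, j) ∈ S ∧ (n + 1, j) ∈ S := by
  induction h with
  | refl => exact Or.inl hc
  | @tail b c' _ hbc ih =>
    rcases ih with ih | ih
    · by_cases h1 : c'.1 ≤ n
      · exact Or.inl h1
      · right
        obtain ⟨hb, hc', hadj⟩ := hbc
        refine ⟨b.2, ?_⟩
        have e1 : b.1 = n := by rcases hadj with h | h <;> omega
        have e2 : c'.1 = n + 1 := by rcases hadj with h | h <;> omega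
        have e3 : c'.2 = b.2 := by rcases hadj with h | h <;> omega
        constructor
        · rw [← e1]; exact hb
        · rw [← e2, ← e3]; exact hc'
    · exact Or.inr ih

lemma rimHook_exists {A B : Partition} {t : ℕ} (h : IsRimHook A B t) :
    ∃ m m', Move A B m m' t := by
  obtain ⟨hle, hne, hconn, hsq, hcard⟩ := h
  obtain ⟨M, hM⟩ := A.eventually_zero
  classical
  have hex : ∃ n, B.parts n < A.parts n := by
    obtain ⟨c, hc⟩ := hne
    rw [mem_skew] at hc
    exact ⟨c.1, by omega⟩
  set m := Nat.find hex with hm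
  have hm1 : B.parts m < A.parts m := Nat.find_spec hex
  have hm2 : ∀ n, n < m → B.parts n = A.parts n := by
    intro n hn
    have := Nat.find_min hex hn
    have := hle n
    omega
  have hltM : ∀ n, B.parts n < A.parts n → n < M := by
    intro n hn
    by_contra h
    have := hM n (by omega)
    omega
  set m' := Nat.findGreatest (fun n => B.parts n < A.parts n) M with hm'
  have hm'1 : B.parts m' < A.parts m' :=
    Nat.findGreatest_spec (P := fun n => B.parts n < A.parts n) (hltM m hm1).le hm1
  have hm'2 : ∀ n, m' < n → B.parts n = A.parts n := by
    intro n hn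
    have h3 := hle n
    by_contra h4
    have h5 : B.parts n < A.parts n := by omega
    have := Nat.le_findGreatest (P := fun n => B.parts n < A.parts n) (hltM n h5).le h5
    omega
  have hmm' : m ≤ m' := Nat.find_min' hex hm'1
  have key : ∀ n, m ≤ n → n < m' → B.parts n + 1 = A.parts (n + 1) := by
    intro n h1 h2
    have hp := hconn (m, B.parts m) (by rw [mem_skew]; exact ⟨le_rfl, hm1⟩)
      (m', B.parts m') (by rw [mem_skew]; exact ⟨le_rfl, hm'1⟩)
    rcases cross n hp h1 with h3 | ⟨j, h3, h4⟩
    · simp at h3; omega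
    · rw [mem_skew] at h3 h4
      simp only at h3 h4
      by_contra h5
      apply hsq
      have := A.antitone (Nat.le_succ n)
      have := B.antitone (Nat.le_succ n)
      simp only [Nat.succ_eq_add_one] at *
      refine ⟨n, B.parts n, ?_, ?_, ?_, ?_⟩ <;> rw [mem_skew] <;> constructor <;> dsimp only <;> omega
  have hE : MoveEq A B m m' := by
    refine ⟨hmm', ?_, ?_, ?_⟩
    · intro n hn; simp [zpos, hm2 n hn]
    · intro n h1 h2; have := key n h1 h2; unfold zpos; push_cast; omega
    · intro n hn; simp [zpos, hm'2 n hn]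
  refine ⟨m, m', hE, ?_⟩
  have := hE.ncard hle
  rw [hcard] at this
  omega

lemma Adj.symm' {c d : ℕ × ℕ} (h : Adj c d) : Adj d c := by
  unfold Adj at *; omega

lemma Move.rimHook {A B : Partition} {m m' t : ℕ} (ht : 0 < t) (h : Move A B m m' t) :
    IsRimHook A B t := by
  have hle := h.le ht
  have hlt := h.pos_lt ht
  have hE := h.1
  have hc := hE.ncard hle
  obtain ⟨⟨h0, h1, h2, h3⟩, h4⟩ := h
  have hlt' : ∀ n, m ≤ n → n ≤ m' → B.parts n < A.parts n := by
    intro n ha hb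
    have := hlt n ha hb
    unfold zpos at this; omega
  have hrow : ∀ n j, (n, j) ∈ A.skew B → m ≤ n ∧ n ≤ m' := by
    intro n j hn
    rw [mem_skew] at hn
    simp only at hn
    constructor
    · by_contra hh
      have := h1 n (by omega); unfold zpos at this; omega
    · by_contra hh
      have := h3 n (by omega); unfold zpos at this; omega
  have key : ∀ n, m ≤ n → n < m' → B.parts n + 1 = A.parts (n + 1) := by
    intro n ha hb
    have := h2 n ha hb
    unfold zpos at this; push_cast at this; omega
  refine ⟨hle, ⟨(m, B.parts m), by rw [mem_skew]; exact ⟨le_rfl, hlt' m le_rfl h0⟩⟩, ?_, ?_, ?_⟩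
  · have hsymm : ∀ c d, Relation.ReflTransGen
        (fun x y => x ∈ A.skew B ∧ y ∈ A.skew B ∧ Adj x y) c d → Relation.ReflTransGen
        (fun x y => x ∈ A.skew B ∧ y ∈ A.skew B ∧ Adj x y) d c := by
      intro c d hcd
      have : Std.Symm (fun x y => x ∈ A.skew B ∧ y ∈ A.skew B ∧ Adj x y) :=
        ⟨fun x y h => ⟨h.2.1, h.1, h.2.2.symm'⟩⟩
      exact Relation.ReflTransGen.stdSymm.symm _ _ hcd
    have hleft : ∀ n j, (n, B.parts n + j) ∈ A.skew B → Relation.ReflTransGen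
        (fun x y => x ∈ A.skew B ∧ y ∈ A.skew B ∧ Adj x y) (n, B.parts n + j) (n, B.parts n) := by
      intro n j
      induction j with
      | zero => intro _; exact Relation.ReflTransGen.refl
      | succ j ih =>
        intro hn
        have hn' : (n, B.parts n + j) ∈ A.skew B := by
          rw [mem_skew] at hn ⊢; simp only at hn ⊢; omega
        refine Relation.ReflTransGen.head ⟨hn, hn', ?_⟩ (ih hn')
        exact Or.inl ⟨rfl, Or.inr rfl⟩
    have hleft' : ∀ n j, (n, j) ∈ A.skew B → Relation.ReflTransGen
        (fun x y => x ∈ A.skew B ∧ y ∈ A.skew B ∧ Adj x y) (n, j) (n, B.parts n) := by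
      intro n j hn
      have hn' := hn
      rw [mem_skew] at hn'
      simp only at hn'
      obtain ⟨i, rfl⟩ := Nat.exists_eq_add_of_le hn'.1
      exact hleft n i hn
    have hdown : ∀ e n, m ≤ n → n + e = m' → Relation.ReflTransGen
        (fun x y => x ∈ A.skew B ∧ y ∈ A.skew B ∧ Adj x y) (n, B.parts n) (m', B.parts m') := by
      intro e
      induction e with
      | zero => intro n hn he; simp at he; subst he; exact Relation.ReflTransGen.refl
      | succ e ih =>
        intro n hn he
        have a1 : (n, B.parts n) ∈ A.skew B := by
          rw [mem_skew]; exact ⟨le_rfl, hlt' n hn (by omega)⟩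
        have a2 : (n + 1, B.parts n) ∈ A.skew B := by
          rw [mem_skew]
          have := B.antitone (Nat.le_succ n)
          have := key n hn (by omega)
          exact ⟨by simpa using B.antitone (Nat.le_succ n), by simp only; omega⟩
        refine Relation.ReflTransGen.head ⟨a1, a2, ?_⟩
          ((hleft' _ _ a2).trans (ih (n+1) (by omega) (by omega)))
        right; simp
    have hall : ∀ c ∈ A.skew B, Relation.ReflTransGen
        (fun x y => x ∈ A.skew B ∧ y ∈ A.skew B ∧ Adj x y) c (m', B.parts m') := by
      rintro ⟨n, j⟩ hn
      obtain ⟨r1, r2⟩ := hrow n j hn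
      exact (hleft' n j hn).trans (hdown (m' - n) n r1 (by omega))
    intro c hc d hd
    exact (hall c hc).trans (hsymm _ _ (hall d hd))
  · rintro ⟨i, j, s1, s2, s3, s4⟩
    have r1 := hrow _ _ s1
    have r2 := hrow _ _ s2
    have := key i (by omega) (by omega)
    rw [mem_skew] at *
    simp only at *
    omega
  · omega

lemma Move.rowCount {A B : Partition} {m m' t : ℕ} (ht : 0 < t) (h : Move A B m m' t) :
    rowCount (A.skew B) = m' - m + 1 := by
  have hlt := h.pos_lt ht
  obtain ⟨⟨h0, h1, h2, h3⟩, h4⟩ := h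
  have : Prod.fst '' (A.skew B) = ↑(Finset.Icc m m') := by
    ext n
    simp only [Set.mem_image, Prod.exists, exists_and_right, exists_eq_right, Finset.coe_Icc,
      Set.mem_Icc]
    constructor
    · rintro ⟨j, hn⟩
      rw [mem_skew] at hn
      simp only at hn
      constructor
      · by_contra hh
        have := h1 n (by omega); unfold zpos at this; omega
      · by_contra hh
        have := h3 n (by omega); unfold zpos at this; omega
    · rintro ⟨ha, hb⟩
      refine ⟨B.parts n, ?_⟩
      rw [mem_skew]
      have := hlt n ha hb
      unfold zpos at this
      simp only; omega
  rw [RimHookPaper.rowCount, this, Set.ncard_coe_finset, Nat.card_Icc]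
  omega

lemma Move.unique {A B B' : Partition} {m m' m'' t : ℕ} (h : Move A B m m' t)
    (h' : Move A B' m m'' t) : m' = m'' ∧ B = B' := by
  have aux : ∀ {B B' : Partition} {m' m'' : ℕ}, Move A B m m' t → Move A B' m m'' t → ¬ m' < m'' := by
    rintro B B' m' m'' ⟨⟨h0, h1, h2, h3⟩, h4⟩ ⟨⟨g0, g1, g2, g3⟩, g4⟩ hlt
    have a1 := g2 m' h0 hlt
    have a2 := zpos_lt B' hlt
    have a3 := zpos_lt B (Nat.lt_succ_self m')
    have a4 := h3 (m'+1) (by omega)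
    simp only [Nat.succ_eq_add_one] at *
    omega
  have e : m' = m'' := by
    have := aux h h'; have := aux h' h; omega
  subst e
  refine ⟨rfl, Partition.ext' fun n => ?_⟩
  obtain ⟨⟨h0, h1, h2, h3⟩, h4⟩ := h
  obtain ⟨⟨g0, g1, g2, g3⟩, g4⟩ := h'
  by_cases ha : n < m
  · rw [h1 n ha, g1 n ha]
  · by_cases hb : n < m'
    · rw [h2 n (by omega) hb, g2 n (by omega) hb]
    · by_cases hc : m' < n
      · rw [h3 n hc, g3 n hc]
      · have : n = m' := by omega
        subst this
        rw [h4, g4]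

lemma Move.unique_left {A B : Partition} {m m' n n' t : ℕ} (ht : 0 < t) (h : Move A B m m' t)
    (h' : Move A B n n' t) : m = n := by
  have aux : ∀ {m m' n n' : ℕ}, Move A B m m' t → Move A B n n' t → ¬ m < n := by
    intro m m' n n' h h' hlt
    have h1 := h'.1.2.1 m hlt
    have h2 := h.pos_lt ht m le_rfl h.1.1
    omega
  have := aux h h'; have := aux h' h; omega

lemma Move.exists {A : Partition} {N m t : ℕ} (ht : 0 < t) (hN : A.parts N = 0) (hm : m < N)
    (hx : -(N : ℤ) ≤ zpos A m - t) (hnot : ∀ n, zpos A n ≠ zpos A m - t) :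
    ∃ B m', m' < N ∧ Move A B m m' t := by
  classical
  set m' := Nat.findGreatest (fun n => zpos A m - t < zpos A n) N with hm'
  have hmm' : m ≤ m' := Nat.le_findGreatest hm.le (by omega)
  have hs : zpos A m - t < zpos A m' :=
    Nat.findGreatest_spec (P := fun n => zpos A m - t < zpos A n) hm.le (by omega)
  have hzN : zpos A N = - N - 1 := by simp [zpos, hN]
  have hm'N : m' < N := by
    have : m' ≤ N := Nat.findGreatest_le N
    rcases lt_or_eq_of_le this with h | h
    · exact h
    · rw [h, hzN] at hs; omega
  have hg : ∀ n, m' < n → zpos A n < zpos A m - t := by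
    have h1 : zpos A (m' + 1) < zpos A m - t := by
      have := hnot (m'+1)
      by_contra h
      have := Nat.le_findGreatest (P := fun n => zpos A m - t < zpos A n) (n := N) (m := m'+1)
        (by omega) (by omega)
      omega
    intro n hn
    rcases Nat.lt_or_ge (m'+1) n with h | h
    · have := zpos_lt A h; omega
    · have : n = m' + 1 := by omega
      rw [this]; exact h1
  have hpos : ∀ n, n ≤ m' → 1 ≤ A.parts n := by
    intro n hn
    have h1 := A.antitone hn
    by_contra hlt
    have h2 : A.parts m' = 0 := by omega
    have h3 : zpos A m' = -m' - 1 := by simp [zpos, h2]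
    apply hnot (-(zpos A m - t) - 1).toNat
    have h4 := A.antitone (show m' ≤ (-(zpos A m - t) - 1).toNat by omega)
    rw [h2] at h4
    have h5 : A.parts (-(zpos A m - t) - 1).toNat = 0 := by omega
    rw [zpos, h5]
    omega
  let f : ℕ → ℕ := fun n => if n < m then A.parts n else if n < m' then A.parts (n+1) - 1
    else if n = m' then A.parts m + m' - m - t else A.parts n
  have hf : Antitone f := by
    apply antitone_nat_of_succ_le
    intro n
    have b1 := A.antitone (Nat.le_succ n)
    have b2 := A.antitone (Nat.le_succ (n+1))
    have b3 := hpos (n+1)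
    have b4 := hg (n+1)
    have b5 := hpos n
    have b6 : n < m → A.parts (n+1+1) ≤ A.parts n := fun _ => b2.trans b1
    have b7 : n < m → A.parts m ≤ A.parts n := fun h => A.antitone h.le
    simp only [Nat.succ_eq_add_one] at *
    simp only [f]
    unfold zpos at *
    push_cast at *
    by_cases hc : n + 1 = m'
    · rw [← hc] at hs hm'N hmm' ⊢
      push_cast at *
      split_ifs <;> omega
    · by_cases hd : n = m'
      · rw [← hd] at hs hm'N hmm' ⊢
        push_cast at *
        split_ifs <;> omega
      · split_ifs <;> omega
  refine ⟨⟨f, fun i j h => hf h, N, ?_⟩, m', hm'N, ⟨hmm', ?_, ?_, ?_⟩, ?_⟩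
  · intro i hi
    have := A.antitone hi
    simp only [f]
    split_ifs <;> omega
  · intro n hn
    simp [zpos, f, hn]
  · intro n h1 h2
    have := hpos (n+1) (by omega)
    have h3 : ¬ n < m := by omega
    simp only [zpos, f, h3, h2, if_true, if_false]
    push_cast
    omega
  · intro n hn
    have h1 : ¬ n < m := by omega
    have h2 : ¬ n < m' := by omega
    have h3 : ¬ n = m' := by omega
    simp [zpos, f, h1, h2, h3]
  · have h1 : ¬ m' < m := by omega
    have h2 := hg (m' + 1) (by omega)
    simp only [zpos, f, h1, if_false, lt_irrefl, if_true] at h2 ⊢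
    push_cast at h2
    omega


section Poly
open MvPolynomial

noncomputable def cf {N : ℕ} (f : MvPolynomial (Fin N) ℚ) (g : Fin N → ℕ) : ℚ :=
  coeff (Finsupp.equivFunOnFinite.symm g) f

lemma cf_mul_psum {N : ℕ} (f : MvPolynomial (Fin N) ℚ) (t : ℕ) (g : Fin N → ℕ) :
    cf (f * psum (Fin N) ℚ t) g =
      ∑ i, if t ≤ g i then cf f (Function.update g i (g i - t)) else 0 := by
  unfold cf psum
  rw [Finset.mul_sum, coeff_sum]
  apply Finset.sum_congr rfl
  intro i _
  rw [X_pow_eq_monomial, coeff_mul_monomial']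
  have : Finsupp.single i t ≤ Finsupp.equivFunOnFinite.symm g ↔ t ≤ g i := by
    rw [Finsupp.single_le_iff]; simp
  by_cases h : t ≤ g i
  · rw [if_pos (this.2 h), if_pos h, mul_one]
    congr 1
    ext j
    by_cases hj : j = i
    · subst hj; simp
    · simp [hj, Finsupp.single_apply, Ne.symm hj]
  · rw [if_neg (fun h' => h (this.1 h')), if_neg h]

def IsAlt {N : ℕ} (f : MvPolynomial (Fin N) ℚ) : Prop :=
  ∀ (σ : Equiv.Perm (Fin N)) (g : Fin N → ℕ),
    cf f (g ∘ σ) = ((Equiv.Perm.sign σ : ℤ) : ℚ) * cf f g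

lemma IsAlt.mul_psum {N : ℕ} {f : MvPolynomial (Fin N) ℚ} (hf : IsAlt f) (t : ℕ) :
    IsAlt (f * psum (Fin N) ℚ t) := by
  intro σ g
  rw [cf_mul_psum, cf_mul_psum, Finset.mul_sum,
    ← Equiv.sum_comp σ (fun i => ((Equiv.Perm.sign σ : ℤ) : ℚ) * _)]
  apply Finset.sum_congr rfl
  intro i _
  simp only [Function.comp]
  split_ifs with h
  · rw [← hf]
    congr 1
    ext j
    by_cases hj : j = i
    · subst hj; simp
    · simp [hj]
  · simp

lemma IsAlt.zero {N : ℕ} {f : MvPolynomial (Fin N) ℚ} (hf : IsAlt f) {g : Fin N → ℕ}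
    {i j : Fin N} (hij : i ≠ j) (h : g i = g j) : cf f g = 0 := by
  have h1 := hf (Equiv.swap i j) g
  have h2 : g ∘ (Equiv.swap i j) = g := by
    ext l
    simp only [Function.comp, Equiv.swap_apply_def]
    split_ifs with ha hb
    · rw [ha, h]
    · rw [hb, h]
    · rfl
  rw [h2, Equiv.Perm.sign_swap hij] at h1
  push_cast at h1
  linarith

def del (N : ℕ) (j : Fin N) : ℕ := N - 1 - j

noncomputable def alt (N : ℕ) : MvPolynomial (Fin N) ℚ :=
  ∑ w : Equiv.Perm (Fin N), monomial (Finsupp.equivFunOnFinite.symm (fun i => del N (w i)))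
    ((Equiv.Perm.sign w : ℤ) : ℚ)

lemma cf_alt_mul {N : ℕ} (f : MvPolynomial (Fin N) ℚ) (g : Fin N → ℕ) :
    cf (alt N * f) g = ∑ w : Equiv.Perm (Fin N), ((Equiv.Perm.sign w : ℤ) : ℚ) *
      if (∀ i, del N (w i) ≤ g i) then cf f (fun i => g i - del N (w i)) else 0 := by
  classical
  unfold cf alt
  rw [Finset.sum_mul, coeff_sum]
  apply Finset.sum_congr rfl
  intro w _
  rw [coeff_monomial_mul']
  have : (Finsupp.equivFunOnFinite.symm (fun i => del N (w i)) ≤ Finsupp.equivFunOnFinite.symm g) ↔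
      (∀ i, del N (w i) ≤ g i) := by
    rw [Finsupp.le_def]; simp
  by_cases h : ∀ i, del N (w i) ≤ g i
  · rw [if_pos (this.2 h), if_pos h]
    congr 2
    ext i; simp
  · rw [if_neg (fun h' => h (this.1 h')), if_neg h, mul_zero]

lemma cf_alt {N : ℕ} (g : Fin N → ℕ) :
    cf (alt N) g = ∑ w : Equiv.Perm (Fin N), ((Equiv.Perm.sign w : ℤ) : ℚ) *
      if (∀ i, g i = del N (w i)) then 1 else 0 := by
  classical
  unfold cf alt
  rw [coeff_sum]
  apply Finset.sum_congr rfl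
  intro w _
  rw [coeff_monomial]
  have : (Finsupp.equivFunOnFinite.symm (fun i => del N (w i)) = Finsupp.equivFunOnFinite.symm g) ↔
      (∀ i, g i = del N (w i)) := by
    rw [Equiv.apply_eq_iff_eq, funext_iff]
    simp only [eq_comm]
  by_cases h : ∀ i, g i = del N (w i)
  · rw [if_pos (this.2 h), if_pos h, mul_one]
  · rw [if_neg (fun h' => h (this.1 h')), if_neg h, mul_zero]

lemma alt_isAlt (N : ℕ) : IsAlt (alt N) := by
  intro σ g
  rw [cf_alt, cf_alt, Finset.mul_sum, ← Equiv.sum_comp (Equiv.mulRight σ)]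
  apply Finset.sum_congr rfl
  intro w _
  have : (∀ i, (g ∘ σ) i = del N ((Equiv.mulRight σ) w i)) ↔ ∀ i, g i = del N (w i) := by
    constructor
    · intro h i
      simpa using h (σ⁻¹ i)
    · intro h i
      simpa using h (σ i)
  simp only [this]
  rw [← mul_assoc]
  congr 1
  simp [mul_comm]

lemma prod_isAlt {N n : ℕ} (m : Fin n → ℕ) : IsAlt (alt N * ∏ j, psum (Fin N) ℚ (m j)) := by
  induction n with
  | zero => simpa using alt_isAlt N
  | succ n ih =>
    rw [Fin.prod_univ_castSucc, ← mul_assoc]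
    exact (ih _).mul_psum _

lemma zpart_cons (t : ℕ) (μ : Multiset ℕ) :
    zpart (t ::ₘ μ) = t * (μ.count t + 1) * zpart μ := by
  classical
  unfold zpart
  have h : ∀ ν : Multiset ℕ, ν.toFinset ⊆ insert t μ.toFinset →
      ∏ j ∈ ν.toFinset, (ν.count j).factorial =
        (ν.count t).factorial * ∏ j ∈ (insert t μ.toFinset).erase t, (ν.count j).factorial := by
    intro ν hν
    rw [Finset.mul_prod_erase _ (fun j => (ν.count j).factorial) (Finset.mem_insert_self _ _)]
    apply Finset.prod_subset hν
    intro x _ hx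
    rw [Multiset.mem_toFinset] at hx
    simp [Multiset.count_eq_zero_of_notMem hx]
  rw [h (t ::ₘ μ) (by simp), h μ (by simp), Multiset.count_cons_self, Multiset.prod_cons,
    Nat.factorial_succ]
  have : ∏ j ∈ (insert t μ.toFinset).erase t, ((t ::ₘ μ).count j).factorial =
      ∏ j ∈ (insert t μ.toFinset).erase t, (μ.count j).factorial := by
    apply Finset.prod_congr rfl
    intro j hj
    rw [Multiset.count_cons_of_ne (Finset.ne_of_mem_erase hj)]
  rw [this]
  ring

lemma zpart_ne_zero {μ : Multiset ℕ} (h : ∀ x ∈ μ, 0 < x) : zpart μ ≠ 0 := by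
  unfold zpart
  apply mul_ne_zero
  · apply Multiset.prod_ne_zero
    intro h0
    exact absurd (h 0 h0) (lt_irrefl _)
  · exact Finset.prod_ne_zero_iff.2 fun _ _ => Nat.factorial_ne_zero _

open Classical in
noncomputable def MP (p : ℕ) : Finset (Multiset ℕ) :=
  (Finset.univ : Finset (Nat.Partition p)).image Nat.Partition.parts

lemma mem_MP {p : ℕ} {μ : Multiset ℕ} : μ ∈ MP p ↔ (∀ x ∈ μ, 0 < x) ∧ μ.sum = p := by
  unfold MP
  simp only [Finset.mem_image, Finset.mem_univ, true_and]
  constructor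
  · rintro ⟨ν, rfl⟩
    exact ⟨fun x hx => ν.parts_pos hx, ν.parts_sum⟩
  · rintro ⟨h1, h2⟩
    exact ⟨⟨μ, fun {i} hi => h1 i hi, h2⟩, rfl⟩

lemma sum_MP {p : ℕ} {M : Type*} [AddCommMonoid M] (f : Multiset ℕ → M) :
    ∑ μ : Nat.Partition p, f μ.parts = ∑ μ ∈ MP p, f μ := by
  classical
  unfold MP
  rw [Finset.sum_image]
  intro a _ b _ h
  exact Nat.Partition.ext h

noncomputable def HH (N k p : ℕ) : MvPolynomial (Fin N) ℚ :=
  ∑ μ ∈ MP p, C (1 / (zpart μ : ℚ)) * (μ.map (fun x => psum (Fin N) ℚ (k * x))).prod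

lemma HH_rec (N k p : ℕ) : C (p : ℚ) * HH N k p =
    ∑ t ∈ Finset.Icc 1 p, HH N k (p - t) * psum (Fin N) ℚ (k * t) := by
  classical
  unfold HH
  rw [Finset.mul_sum]
  have e1 : ∀ μ ∈ MP p, C (p : ℚ) * (C (1 / (zpart μ : ℚ)) *
      (μ.map (fun x => psum (Fin N) ℚ (k * x))).prod) =
      ∑ t ∈ μ.toFinset, C (1 / (zpart (μ.erase t) : ℚ)) *
        ((μ.erase t).map (fun x => psum (Fin N) ℚ (k * x))).prod * psum (Fin N) ℚ (k * t) := by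
    intro μ hμ
    rw [mem_MP] at hμ
    have hp : p = ∑ t ∈ μ.toFinset, μ.count t * t := by
      rw [← hμ.2]
      conv_lhs => rw [Finset.sum_multiset_count]
      simp
    have hp' : (p : ℚ) = ∑ t ∈ μ.toFinset, (μ.count t : ℚ) * t := by
      conv_lhs => rw [hp]
      push_cast; rfl
    rw [hp', map_sum, Finset.sum_mul]
    apply Finset.sum_congr rfl
    intro t ht
    rw [Multiset.mem_toFinset] at ht
    have hz := zpart_cons t (μ.erase t)
    have hprod : (μ.map (fun x => psum (Fin N) ℚ (k * x))).prod =
        psum (Fin N) ℚ (k * t) * ((μ.erase t).map (fun x => psum (Fin N) ℚ (k * x))).prod := by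
      conv_lhs => rw [← Multiset.cons_erase ht]
      simp
    rw [hprod, ← mul_assoc, ← C_mul]
    have hc : (μ.count t : ℚ) * t * (1 / (zpart μ : ℚ)) = 1 / (zpart (μ.erase t) : ℚ) := by
      rw [Multiset.cons_erase ht, Multiset.count_erase_self] at hz
      have hcp : 0 < μ.count t := Multiset.count_pos.2 ht
      rw [Nat.sub_add_cancel hcp] at hz
      have hz0 := zpart_ne_zero hμ.1
      have hz1 : zpart (μ.erase t) ≠ 0 := by
        intro h; rw [h] at hz; simp at hz; exact hz0 hz
      have ht0 : t ≠ 0 := (hμ.1 t ht).ne'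
      rw [hz]
      push_cast
      have : (μ.count t : ℚ) ≠ 0 := by exact_mod_cast hcp.ne'
      field_simp
    rw [hc]; ring
  rw [Finset.sum_congr rfl e1]
  simp_rw [Finset.sum_mul]
  rw [Finset.sum_sigma', Finset.sum_sigma']
  refine Finset.sum_bij' (fun x _ => ⟨x.2, x.1.erase x.2⟩) (fun y _ => ⟨y.1 ::ₘ y.2, y.1⟩)
    ?_ ?_ ?_ ?_ ?_
  · rintro ⟨μ, t⟩ h
    simp only [Finset.mem_sigma, mem_MP, Multiset.mem_toFinset, Finset.mem_Icc] at h ⊢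
    obtain ⟨⟨h1, h2⟩, h3⟩ := h
    have := Multiset.cons_erase h3
    have hs : t + (μ.erase t).sum = p := by rw [← h2]; conv_rhs => rw [← this, Multiset.sum_cons]
    exact ⟨⟨h1 t h3, by omega⟩, fun x hx => h1 x (Multiset.mem_of_mem_erase hx), by omega⟩
  · rintro ⟨t, μ⟩ h
    simp only [Finset.mem_sigma, mem_MP, Multiset.mem_toFinset, Finset.mem_Icc] at h ⊢
    obtain ⟨⟨h1, h2⟩, h3, h4⟩ := h
    refine ⟨⟨?_, ?_⟩, by simp⟩
    · intro x hx
      rcases Multiset.mem_cons.1 hx with rfl | hx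
      · omega
      · exact h3 x hx
    · rw [Multiset.sum_cons]; omega
  · rintro ⟨μ, t⟩ h
    simp only [Finset.mem_sigma, Multiset.mem_toFinset] at h
    simp [Multiset.cons_erase h.2]
  · rintro ⟨t, μ⟩ h
    simp
  · rintro ⟨μ, t⟩ h
    rfl

open Classical in
lemma cf_HH (N k p : ℕ) (hk : 0 < k) (g : Fin N → ℕ) :
    cf (HH N k p) g = if (∀ i, k ∣ g i) ∧ ∑ i, g i = k * p then 1 else 0 := by
  induction p using Nat.strong_induction_on generalizing g with
  | _ p ih =>
  rcases Nat.eq_zero_or_pos p with rfl | hp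
  · have : HH N k 0 = 1 := by
      unfold HH
      have : MP 0 = {0} := by
        ext μ
        rw [mem_MP, Finset.mem_singleton]
        constructor
        · rintro ⟨h1, h2⟩
          by_contra h
          obtain ⟨x, hx⟩ := Multiset.exists_mem_of_ne_zero h
          have := h1 x hx
          have := Multiset.single_le_sum (fun _ _ => Nat.zero_le _) x hx
          omega
        · rintro rfl; simp
      rw [this]
      simp [zpart]
    rw [this, cf, coeff_one]
    congr 1
    simp only [eq_iff_iff]
    constructor
    · intro h
      have hg : ∀ i, g i = 0 := fun i => by
        have := DFunLike.congr_fun h i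
        simpa using this.symm
      simp [hg]
    · rintro ⟨h1, h2⟩
      ext i
      have : g i ≤ 0 := by
        rw [mul_zero] at h2
        rw [← h2]
        exact Finset.single_le_sum (fun _ _ => Nat.zero_le _) (Finset.mem_univ i)
      simp; omega
  · have hr := congrArg (fun f => cf f g) (HH_rec N k p)
    have e1 : cf (C (p : ℚ) * HH N k p) g = p * cf (HH N k p) g := by
      unfold cf; rw [coeff_C_mul]
    have e2 : cf (∑ t ∈ Finset.Icc 1 p, HH N k (p - t) * psum (Fin N) ℚ (k * t)) g =
        ∑ t ∈ Finset.Icc 1 p, cf (HH N k (p - t) * psum (Fin N) ℚ (k * t)) g := by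
      unfold cf; rw [coeff_sum]
    rw [e1, e2] at hr
    simp_rw [cf_mul_psum] at hr
    have hp0 : (p : ℚ) ≠ 0 := by exact_mod_cast hp.ne'
    apply mul_left_cancel₀ hp0
    rw [hr]
    have e3 : ∀ t ∈ Finset.Icc 1 p, (∑ i, if k * t ≤ g i then
        cf (HH N k (p - t)) (Function.update g i (g i - k * t)) else 0) =
        ∑ i, if k * t ≤ g i ∧ ((∀ i, k ∣ g i) ∧ ∑ i, g i = k * p) then (1 : ℚ) else 0 := by
      intro t ht
      rw [Finset.mem_Icc] at ht
      apply Finset.sum_congr rfl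
      intro i _
      by_cases hi : k * t ≤ g i
      · rw [if_pos hi, ih (p - t) (by omega)]
        congr 1
        simp only [hi, true_and, eq_iff_iff]
        have hsum : ∑ j, Function.update g i (g i - k * t) j + k * t = ∑ j, g j := by
          have h7 := Finset.add_sum_erase Finset.univ g (Finset.mem_univ i)
          rw [Finset.sum_update_of_mem (Finset.mem_univ i), Finset.sdiff_singleton_eq_erase]
          omega
        have hkk : k * (p - t) + k * t = k * p := by
          rw [← mul_add]; congr 1; omega
        have hdiv : (∀ j, k ∣ Function.update g i (g i - k * t) j) ↔ ∀ j, k ∣ g j := by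
          apply forall_congr'
          intro j
          by_cases hj : j = i
          · subst hj
            rw [Function.update_self]
            exact (Nat.dvd_sub_iff_left hi (dvd_mul_right k t))
          · rw [Function.update_of_ne hj]
        rw [hdiv]
        constructor
        · rintro ⟨a, b⟩; exact ⟨a, by omega⟩
        · rintro ⟨a, b⟩; exact ⟨a, by omega⟩
      · simp [hi]
    rw [Finset.sum_congr rfl e3]
    by_cases hc : (∀ i, k ∣ g i) ∧ ∑ i, g i = k * p
    · rw [if_pos hc, Finset.sum_comm, mul_one]
      have e4 : ∀ i, (∑ t ∈ Finset.Icc 1 p, if k * t ≤ g i ∧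
          ((∀ i, k ∣ g i) ∧ ∑ i, g i = k * p) then (1 : ℚ) else 0) = ((g i / k : ℕ) : ℚ) := by
        intro i
        simp only [hc, and_true, implies_true]
        rw [Finset.sum_boole]
        congr 1
        have : (Finset.Icc 1 p).filter (fun t => k * t ≤ g i) = Finset.Icc 1 (g i / k) := by
          ext t
          simp only [Finset.mem_filter, Finset.mem_Icc, Nat.le_div_iff_mul_le hk]
          have : g i ≤ k * p := by
            rw [← hc.2]
            exact Finset.single_le_sum (fun _ _ => Nat.zero_le _) (Finset.mem_univ i)
          constructor
          · rintro ⟨⟨a, b⟩, c⟩; exact ⟨a, by linarith⟩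
          · rintro ⟨a, b⟩
            have h5 : k * t ≤ k * p := by linarith
            exact ⟨⟨a, Nat.le_of_mul_le_mul_left h5 hk⟩, by linarith⟩
        rw [this]; simp
      rw [Finset.sum_congr rfl (fun i _ => e4 i)]
      rw [← Nat.cast_sum]
      congr 1
      apply Nat.eq_of_mul_eq_mul_left hk
      rw [← hc.2, Finset.mul_sum]
      apply Finset.sum_congr rfl
      intro i _
      exact Nat.mul_div_cancel' (hc.1 i)
    · simp [hc]

end Poly


section MN
open MvPolynomial

def beta (N : ℕ) (P : Partition) (i : Fin N) : ℕ := P.parts i + del N i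

lemma beta_cast (N : ℕ) (P : Partition) (i : Fin N) : (beta N P i : ℤ) = zpos P i + N := by
  have := i.2
  unfold beta del zpos
  push_cast
  omega

lemma del_cast (N : ℕ) (i : Fin N) : (del N i : ℤ) = N - 1 - i := by
  have := i.2
  unfold del
  omega

lemma Move.lt_N {N : ℕ} {P B : Partition} (hP : P.parts N = 0) {m m' t : ℕ} (ht : 0 < t)
    (h : Move P B m m' t) : m' < N := by
  have := h.pos_lt ht m' h.1.1 le_rfl
  by_contra hh
  have h2 := P.antitone (not_lt.1 hh)
  unfold zpos at this
  omega

lemma Move.beta {N : ℕ} {P B : Partition} {m m' : Fin N} {t : ℕ}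
    (h : Move P B m m' t) :
    t ≤ beta N P m ∧ beta N B =
      (Function.update (beta N P) m (beta N P m - t)) ∘ (Fin.cycleIcc m m') := by
  have hN : NeZero N := ⟨by have := m.2; omega⟩
  obtain ⟨⟨h0, h1, h2, h3⟩, h4⟩ := h
  have ht : t ≤ RimHookPaper.beta N P m := by
    have e1 := beta_cast N B m'
    have e2 := beta_cast N P m
    omega
  refine ⟨ht, ?_⟩
  ext i
  apply Int.natCast_inj.1
  rw [beta_cast, Function.comp]
  by_cases ha : i < m
  · rw [Fin.cycleIcc_of_lt ha, Function.update_of_ne (Fin.ne_of_lt ha), beta_cast, h1 i ha]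
  · by_cases hb : m' < i
    · have hne : i ≠ m := by
        intro h; subst h; have := Fin.lt_def.1 hb; omega
      rw [Fin.cycleIcc_of_gt hb, Function.update_of_ne hne, beta_cast, h3 i hb]
    · rcases eq_or_lt_of_le (not_lt.1 hb) with hc | hc
      · subst hc
        rw [Fin.cycleIcc_of_last h0, Function.update_self, h4]
        push_cast [ht]
        rw [beta_cast]; ring
      · rw [Fin.cycleIcc_of_ge_of_lt (not_lt.1 ha) hc]
        have hv : ((i + 1 : Fin N) : ℕ) = i + 1 := by
          apply Fin.val_add_one_of_lt'
          have := m'.2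
          have := Fin.lt_def.1 hc
          omega
        have hne : i + 1 ≠ m := by
          intro h
          have := congrArg Fin.val h
          rw [hv] at this
          have := Fin.le_def.1 (not_lt.1 ha)
          omega
        rw [Function.update_of_ne hne, beta_cast, hv, h2 i (not_lt.1 ha) hc]

def SS {n : ℕ} (m : Fin n → ℕ) (P : Partition) : Set (Fin (n + 1) → Partition) :=
  {c | c 0 = Partition.empty ∧ c (Fin.last n) = P ∧
    ∀ j : Fin n, IsStep (c j.succ) (c j.castSucc) (m j)}

noncomputable def ht {n : ℕ} (c : Fin (n + 1) → Partition) : ℕ :=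
  ∑ j : Fin n, (rowCount ((c j.succ).skew (c j.castSucc)) - 1)

lemma mem_SS_succ {n : ℕ} (m : Fin (n + 1) → ℕ) (P : Partition) (c : Fin (n + 2) → Partition) :
    c ∈ SS m P ↔ c (Fin.last _) = P ∧
      (fun j : Fin (n + 1) => c j.castSucc) ∈ SS (fun j => m j.castSucc) (c (Fin.last n).castSucc) ∧
      IsStep P (c (Fin.last n).castSucc) (m (Fin.last n)) := by
  unfold SS
  simp only [Set.mem_ofPred_eq]
  rw [Fin.forall_fin_succ']
  simp only [Fin.castSucc_zero, Fin.succ_last, Fin.succ_castSucc, true_and]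
  constructor
  · rintro ⟨h1, h2, h3, h4⟩
    refine ⟨h2, ⟨h1, h3⟩, ?_⟩
    rw [← h2]; exact h4
  · rintro ⟨h1, ⟨h2, h3⟩, h4⟩
    refine ⟨h2, h1, h3, ?_⟩
    rw [← h1] at h4; exact h4

lemma ht_succ {n : ℕ} (c : Fin (n + 2) → Partition) :
    ht c = ht (fun j : Fin (n + 1) => c j.castSucc) +
      (rowCount ((c (Fin.last (n+1))).skew (c (Fin.last n).castSucc)) - 1) := by
  unfold ht
  rw [Fin.sum_univ_castSucc]
  rfl

theorem MN_main (N : ℕ) {n : ℕ} (m : Fin n → ℕ) (hm : ∀ j, 0 < m j) (P : Partition)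
    (hP : P.parts N = 0) : (SS m P).Finite ∧
      ∑ᶠ c ∈ SS m P, (-1 : ℚ) ^ ht c =
        cf (alt N * ∏ j, psum (Fin N) ℚ (m j)) (beta N P) := by
  classical
  induction n generalizing P with
  | zero =>
    have hsub : SS m P ⊆ {fun _ => Partition.empty} := by
      rintro c ⟨h1, h2, h3⟩
      rw [Set.mem_singleton_iff]
      funext j
      rw [← h1]
      congr 1
      exact Fin.fin_one_eq_zero j
    refine ⟨(Set.finite_singleton _).subset hsub, ?_⟩
    simp only [Finset.univ_eq_empty, Finset.prod_empty, mul_one]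
    rw [cf_alt]
    by_cases hPe : P = Partition.empty
    · subst hPe
      have : SS m Partition.empty = {fun _ => Partition.empty} := by
        apply Set.Subset.antisymm hsub
        rintro c rfl
        exact ⟨rfl, rfl, fun j => j.elim0⟩
      rw [this, finsum_mem_singleton]
      rw [Finset.sum_eq_single 1]
      · simp [ht, beta, Partition.empty]
      · intro w _ hw
        rw [if_neg, mul_zero]
        intro h
        apply hw
        ext i
        have h1 := h i
        have := i.2
        have := (w i).2
        simp only [beta, Partition.empty, del] at h1
        simp
        omega
      · simp
    · have : SS m P = ∅ := by
        apply Set.eq_empty_of_forall_notMem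
        rintro c ⟨h1, h2, h3⟩
        apply hPe
        rw [← h1, ← h2]
        rfl
      rw [this, finsum_mem_empty]
      symm
      apply Finset.sum_eq_zero
      intro w _
      rw [if_neg, mul_zero]
      intro h
      have hlt : ∀ i j : Fin N, i < j → w i < w j := by
        intro i j hij
        have a1 := h i
        have a2 := h j
        have a3 := P.antitone (Fin.le_def.1 hij.le)
        have := i.2
        have := j.2
        have := (w i).2
        have := (w j).2
        have := Fin.lt_def.1 hij
        rw [Fin.lt_def]
        simp only [beta, del] at a1 a2
        omega
      have hw : ⇑w = id := by
        have hmono : StrictMono w := fun i j h => hlt i j h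
        have := hmono.range_inj (g := id) strictMono_id
        rw [← this]
        simp
      apply hPe
      apply Partition.ext'
      intro i
      have : P.parts i = 0 := by
        by_cases hi : i < N
        · have := h ⟨i, hi⟩
          rw [hw] at this
          simp only [beta, id] at this
          omega
        · have := P.antitone (not_lt.1 hi)
          omega
      simp [zpos, this, Partition.empty]
  | succ n ih =>
    set t := m (Fin.last n) with ht'
    have ht0 : 0 < t := hm _
    let U : Fin N → Set (Fin (n + 2) → Partition) := fun a =>
      {c | c ∈ SS m P ∧ ∃ m', Move P (c (Fin.last n).castSucc) a m' t}
    have hU : SS m P = ⋃ a, U a := by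
      ext c
      simp only [Set.mem_iUnion]
      constructor
      · intro hc
        have h1 := ((mem_SS_succ m P c).1 hc).2.2
        rcases h1 with h1 | h1
        · omega
        · obtain ⟨a, m', hM⟩ := rimHook_exists h1.2
          have := hM.lt_N hP h1.1
          exact ⟨⟨a, lt_of_le_of_lt hM.1.1 this⟩, hc, m', hM⟩
      · rintro ⟨a, ha⟩
        exact ha.1
    have hdisj : Pairwise (Function.onFun Disjoint U) := by
      intro a b hab
      rw [Function.onFun, Set.disjoint_left]
      rintro c ⟨_, m', h1⟩ ⟨_, m'', h2⟩
      exact hab (Fin.ext (h1.unique_left ht0 h2))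
    set f := alt N * ∏ j : Fin n, psum (Fin N) ℚ (m j.castSucc) with hf
    have hfalt : IsAlt f := prod_isAlt _
    have key : ∀ a : Fin N, (U a).Finite ∧ ∑ᶠ c ∈ U a, (-1 : ℚ) ^ ht c =
        if t ≤ beta N P a then cf f (Function.update (beta N P) a (beta N P a - t)) else 0 := by
      intro a
      by_cases hex : ∃ B m', Move P B a m' t
      · obtain ⟨B, m', hM⟩ := hex
        have hm'N := hM.lt_N hP ht0
        have hBN : B.parts N = 0 := by
          have := hM.le ht0 N
          omega
        obtain ⟨m', rfl⟩ : ∃ x : Fin N, x = m' := ⟨⟨m', hm'N⟩, rfl⟩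
        obtain ⟨hle, hb⟩ := hM.beta
        rw [if_pos hle]
        obtain ⟨ihf, ihs⟩ := ih (fun j => m j.castSucc) (fun j => hm _) B hBN
        let ι : (Fin (n + 1) → Partition) → (Fin (n + 2) → Partition) :=
          fun c => Fin.snoc (α := fun _ => Partition) c P
        have hUa : U a = ι '' (SS (fun j => m j.castSucc) B) := by
          ext c
          constructor
          · rintro ⟨hc, m'', hM'⟩
            obtain ⟨c1, c2, c3⟩ := (mem_SS_succ m P c).1 hc
            have hB := (hM.unique hM').2
            rw [← hB] at c2
            refine ⟨_, c2, ?_⟩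
            have := Fin.snoc_init_self (α := fun _ => Partition) c
            rw [c1] at this
            exact this
          · rintro ⟨c', hc', rfl⟩
            have hl : ι c' (Fin.last n).castSucc = B := by
              simp only [ι, Fin.snoc_castSucc]
              exact hc'.2.1
            refine ⟨?_, m', by rw [hl]; exact hM⟩
            rw [mem_SS_succ, hl]
            refine ⟨by simp [ι], ?_, Or.inr ⟨ht0, hM.rimHook ht0⟩⟩
            simp only [ι, Fin.snoc_castSucc]
            exact hc'
        rw [hUa]
        refine ⟨ihf.image _, ?_⟩
        rw [finsum_mem_image]
        · have e : ∀ c ∈ SS (fun j => m j.castSucc) B,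
              (-1 : ℚ) ^ ht (ι c) = (-1) ^ ((m' : ℕ) - a) * (-1) ^ ht c := by
            intro c hc
            rw [ht_succ]
            have hl : ι c (Fin.last n).castSucc = B := by
              simp only [ι, Fin.snoc_castSucc]
              exact hc.2.1
            have hl2 : ι c (Fin.last (n+1)) = P := by simp [ι]
            rw [hl, hl2, hM.rowCount ht0, Nat.add_sub_cancel, pow_add, mul_comm]
            simp only [ι, Fin.snoc_castSucc]
          rw [finsum_mem_congr rfl e, ← mul_finsum_mem, ihs, hb, hfalt,
            Fin.sign_cycleIcc_of_le hM.1.1, ← mul_assoc]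
          push_cast
          rw [← pow_add, ← two_mul, pow_mul]
          simp
        · intro c _ c' _ h
          funext j
          have := congrFun h j.castSucc
          simpa [ι] using this
      · have hUe : U a = ∅ := by
          apply Set.eq_empty_of_forall_notMem
          rintro c ⟨_, m', hM⟩
          exact hex ⟨_, m', hM⟩
        rw [hUe, finsum_mem_empty]
        refine ⟨Set.finite_empty, ?_⟩
        split_ifs with hle
        · symm
          have hba := beta_cast N P a
          have : ∃ b, zpos P b = zpos P a - t := by
            by_contra hno
            push Not at hno
            obtain ⟨B, m', _, hM⟩ := Move.exists ht0 hP a.2 (by omega) hno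
            exact hex ⟨B, m', hM⟩
          obtain ⟨b, hb⟩ := this
          have hbN : b < N := by
            by_contra hh
            have := P.antitone (not_lt.1 hh)
            unfold zpos at hb hba
            omega
          have hbb := beta_cast N P ⟨b, hbN⟩
          have hne : a ≠ ⟨b, hbN⟩ := by
            intro h
            rw [h] at hb
            simp at hb
            omega
          apply hfalt.zero hne
          rw [Function.update_self, Function.update_of_ne hne.symm]
          simp only at hbb
          omega
        · rfl
    rw [hU]
    refine ⟨Set.finite_iUnion fun a => (key a).1, ?_⟩
    rw [finsum_mem_iUnion hdisj (fun a => (key a).1), finsum_eq_sum_of_fintype,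
      Fin.prod_univ_castSucc, ← mul_assoc, cf_mul_psum]
    exact Finset.sum_congr rfl fun a _ => (key a).2

lemma chiAux_eq (N : ℕ) (l : List ℕ) (hl : ∀ x ∈ l, 0 < x) (P : Partition)
    (hP : P.parts N = 0) :
    (chiAux P l : ℚ) = cf (alt N * (l.map (psum (Fin N) ℚ)).prod) (beta N P) := by
  obtain ⟨hfin, hsum⟩ := MN_main N l.get (fun j => hl _ (List.get_mem _ _)) P hP
  let e : RHT P l ≃ SS l.get P :=
    { toFun := fun T => ⟨T.chain, T.chain_zero, T.chain_last, T.step⟩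
      invFun := fun c => ⟨c.1, c.2.1, c.2.2.1, c.2.2.2⟩
      left_inv := fun T => rfl
      right_inv := fun c => rfl }
  have : Finite (SS l.get P) := hfin
  have : Finite (RHT P l) := Finite.of_equiv _ e.symm
  have h1 : (chiAux P l : ℚ) = ∑ᶠ T : RHT P l, (-1 : ℚ) ^ T.height := by
    unfold chiAux
    have := (Int.castAddHom ℚ).map_finsum (f := fun T : RHT P l => (-1 : ℤ) ^ T.height)
      (Set.toFinite _)
    simp only [Int.coe_castAddHom] at this
    rw [this]
    push_cast
    rfl
  rw [h1]
  have h2 : (l.map (psum (Fin N) ℚ)).prod = ∏ j, psum (Fin N) ℚ (l.get j) := by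
    rw [← List.prod_ofFn]
    congr 1
    conv_lhs => rw [← List.ofFn_get l, List.map_ofFn]
    rfl
  rw [h2, ← hsum, ← finsum_set_coe_eq_finsum_mem]
  exact finsum_eq_of_bijective e e.bijective (fun T => rfl)

lemma chi_eq (N : ℕ) (μ : Multiset ℕ) (hl : ∀ x ∈ μ, 0 < x) (P : Partition)
    (hP : P.parts N = 0) :
    (chi P μ : ℚ) = cf (alt N * (μ.map (psum (Fin N) ℚ)).prod) (beta N P) := by
  have hc : (↑(typeList μ) : Multiset ℕ) = μ := by
    unfold typeList
    rw [Multiset.coe_reverse, Multiset.sort_eq]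
  unfold chi
  rw [chiAux_eq N _ _ P hP]
  · congr 2
    conv_rhs => rw [← hc, Multiset.map_coe, Multiset.prod_coe]
  · intro x hx
    apply hl
    rw [← hc]; exact hx

lemma size_sum {N : ℕ} {P : Partition} (hP : P.parts N = 0) :
    P.size = ∑ i : Fin N, P.parts i := by
  unfold Partition.size
  rw [finsum_eq_sum_of_support_subset (s := Finset.range N), Finset.sum_range]
  intro i hi
  simp only [Function.mem_support] at hi
  simp only [Finset.coe_range, Set.mem_Iio]
  by_contra h
  have := P.antitone (not_lt.1 h)
  omega

open Classical in
noncomputable def MM (N k : ℕ) (P : Partition) : Matrix (Fin N) (Fin N) ℚ :=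
  fun i j => if del N j ≤ beta N P i ∧ k ∣ beta N P i - del N j then 1 else 0

open Classical in
theorem sum_formula (N k p : ℕ) (hk : 0 < k) (P : Partition) (hP : P.parts N = 0)
    (hs : P.size = k * p) :
    ∑ μ : Nat.Partition p, (1 / (zpart μ.parts : ℚ)) *
        (chi P (μ.parts.map fun x => k * x) : ℚ) =
      ∑ w : Equiv.Perm (Fin N), ((Equiv.Perm.sign w : ℤ) : ℚ) *
        if ∀ i, del N (w i) ≤ beta N P i ∧ k ∣ beta N P i - del N (w i) then 1 else 0 := by
  rw [sum_MP (fun μ => (1 / (zpart μ : ℚ)) * (chi P (μ.map fun x => k * x) : ℚ))]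
  have h1 : ∑ μ ∈ MP p, (1 / (zpart μ : ℚ)) * (chi P (μ.map fun x => k * x) : ℚ) =
      cf (alt N * HH N k p) (beta N P) := by
    unfold HH
    rw [Finset.mul_sum, cf, coeff_sum]
    apply Finset.sum_congr rfl
    intro μ hμ
    rw [mem_MP] at hμ
    rw [chi_eq N _ _ P hP, mul_left_comm, coeff_C_mul, Multiset.map_map]
    · rfl
    · intro x hx
      obtain ⟨y, hy, rfl⟩ := Multiset.mem_map.1 hx
      exact Nat.mul_pos hk (hμ.1 y hy)
  rw [h1, cf_alt_mul]
  apply Finset.sum_congr rfl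
  intro w _
  congr 1
  by_cases ha : ∀ i, del N (w i) ≤ beta N P i
  · rw [if_pos ha, cf_HH _ _ _ hk]
    congr 1
    simp only [ha, true_and, eq_iff_iff, and_iff_left_iff_imp]
    intro _
    rw [← hs, size_sum hP]
    have h2 : ∑ i, (beta N P i - del N (w i)) + ∑ i, del N (w i) = ∑ i, beta N P i := by
      rw [← Finset.sum_add_distrib]
      exact Finset.sum_congr rfl fun i _ => Nat.sub_add_cancel (ha i)
    rw [Equiv.sum_comp w] at h2
    simp only [beta, Finset.sum_add_distrib] at h2 ⊢
    omega
  · rw [if_neg ha, if_neg]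
    intro h
    exact ha fun i => (h i).1

theorem sum_formula_det (N k p : ℕ) (hk : 0 < k) (P : Partition) (hP : P.parts N = 0)
    (hs : P.size = k * p) :
    ∑ μ : Nat.Partition p, (1 / (zpart μ.parts : ℚ)) *
        (chi P (μ.parts.map fun x => k * x) : ℚ) = (MM N k P).det := by
  classical
  rw [sum_formula N k p hk P hP hs, ← Matrix.det_transpose, Matrix.det_apply']
  apply Finset.sum_congr rfl
  intro w _
  congr 1
  simp only [Matrix.transpose_apply, MM]
  rw [Finset.prod_ite_zero]
  simp

end MN


lemma parts_length (P : Partition) : P.parts P.length = 0 := by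
  obtain ⟨M, hM⟩ := P.eventually_zero
  exact Nat.sInf_mem (s := {N | P.parts N = 0}) ⟨M, hM M le_rfl⟩

lemma entry_iff {N k : ℕ} (P : Partition) (r j : Fin N) :
    (del N j ≤ beta N P r ∧ k ∣ beta N P r - del N j) ↔
      ∃ c : ℕ, zpos P r = -1 - (j : ℤ) + (k : ℤ) * c := by
  have h1 := beta_cast N P r
  have h2 := del_cast N j
  constructor
  · rintro ⟨h3, c, h4⟩
    refine ⟨c, ?_⟩
    have h5 : ((k * c : ℕ) : ℤ) = beta N P r - del N j := by rw [← h4]; omega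
    push_cast at h5
    omega
  · rintro ⟨c, h3⟩
    have h5 : ((k * c : ℕ) : ℤ) = beta N P r - del N j := by push_cast; omega
    exact ⟨by omega, c, by omega⟩

lemma step_track {A B : Partition} {k : ℕ} (hk : 0 < k) (hs : IsStep A B k) {f g : ℕ → ℕ}
    (h : StepTrack A B f g) (i : ℕ) :
    ∃ c : ℕ, zpos B (g i) = zpos A (f i) - (k : ℤ) * c := by
  rcases h with ⟨rfl, rfl⟩ | ⟨m, m', h0, h1, h2, h3, rfl⟩
  · exact ⟨0, by simp⟩
  · rcases hs with hs | ⟨_, hs⟩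
    · omega
    · have hE : MoveEq A B m m' := ⟨h0, h1, h2, h3⟩
      have hc := hE.ncard hs.1
      rw [hs.2.2.2.2] at hc
      unfold cycleFun
      beta_reduce
      split_ifs with ha hb
      · refine ⟨1, ?_⟩
        rw [ha]; push_cast; omega
      · refine ⟨0, ?_⟩
        rw [h2 (f i - 1) (by omega) (by omega), show f i - 1 + 1 = f i by omega]; simp
      · refine ⟨0, ?_⟩
        rcases Nat.lt_or_ge (f i) m with h5 | h5
        · rw [h1 _ h5]; simp
        · rw [h3 _ (by omega)]; simp

def Valid {N : ℕ} (k : ℕ) (P : Partition) (w : Equiv.Perm (Fin N)) : Prop :=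
  ∀ r : Fin N, ∃ c : ℕ, zpos P r = -1 - (w r : ℤ) + (k : ℤ) * c

lemma zeroPerm_valid {k p : ℕ} (hk : 0 < k) {P : Partition} (T₀ : RHT P (List.replicate p k))
    (π : Equiv.Perm (Fin P.length)) (hπ : IsZeroPerm T₀ π) :
    ∃ w : Equiv.Perm (Fin P.length), Equiv.Perm.sign w = Equiv.Perm.sign π ∧ Valid k P w := by
  obtain ⟨q, hq1, hq2, hq3⟩ := hπ
  have key : ∀ j, ∀ i, i < P.length →
      ∃ c : ℕ, zpos (T₀.chain j) (q j i) = zpos P (P.length - 1 - i) - (k : ℤ) * c := by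
    intro j
    induction j using Fin.reverseInduction with
    | last =>
      intro i hi
      refine ⟨0, ?_⟩
      rw [T₀.chain_last, hq1 i hi]; simp
    | cast j ih =>
      intro i hi
      obtain ⟨c, hc⟩ := ih i hi
      have hs := T₀.step j
      have hget : (List.replicate p k).get j = k := by simp
      rw [hget] at hs
      obtain ⟨c', hc'⟩ := step_track hk hs (hq2 j) i
      refine ⟨c + c', ?_⟩
      rw [hc', hc]; push_cast; ring
  refine ⟨Fin.revPerm * π⁻¹ * Fin.revPerm, ?_, ?_⟩
  · simp only [map_mul, Equiv.Perm.sign_inv]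
    rw [mul_comm, ← mul_assoc, Int.units_mul_self, one_mul]
  · intro r
    obtain ⟨i, rfl⟩ : ∃ i, r = Fin.rev (π i) := ⟨π⁻¹ (Fin.rev r), by simp⟩
    obtain ⟨c, hc⟩ := key 0 (π i) (π i).2
    refine ⟨c, ?_⟩
    rw [hq3 i, T₀.chain_zero] at hc
    have h1 : ((Fin.rev (π i) : Fin P.length) : ℕ) = P.length - 1 - (π i : ℕ) := by
      rw [Fin.val_rev]; omega
    have h2 : (Fin.revPerm * π⁻¹ * Fin.revPerm : Equiv.Perm (Fin P.length)) (Fin.rev (π i)) = Fin.rev i := by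
      simp
    rw [h1, h2, Fin.val_rev]
    have := i.2
    simp only [zpos, Partition.empty] at hc ⊢
    push_cast at hc ⊢
    omega

lemma count_class {P Q : Partition} {k : ℕ} (i : ℕ) (hi : i < k) (d : ℤ)
    (h : ∀ j : ℤ, isZeroAt Q j ↔ isZeroAt P ((i : ℤ) + (j + d) * (k : ℤ)))
    (M R : ℕ) (hM : ∀ n, M ≤ n → Q.parts n = 0) (hR : P.parts R = 0)
    (hRM : (R : ℤ) + 1 + i = (M + 1 - d) * k) :
    ∑ r ∈ Finset.range R, (if zpos P r % (k : ℤ) = i then 1 else 0) = M := by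
  classical
  have hk : (0 : ℤ) < k := by omega
  have hzR : zpos P R = -R - 1 := by simp [zpos, hR]
  rw [← Finset.card_filter]
  have himg : ((Finset.range R).filter (fun r => zpos P r % (k : ℤ) = i)).image (zpos P) =
      (Finset.range M).image (fun n => (i : ℤ) + (zpos Q n + d) * k) := by
    ext x
    simp only [Finset.mem_image, Finset.mem_filter, Finset.mem_range]
    constructor
    · rintro ⟨r, ⟨hr, hmod⟩, rfl⟩
      have hx : zpos P r = (i : ℤ) + ((zpos P r / k - d) + d) * k := by
        have := Int.emod_add_mul_ediv (zpos P r) k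
        rw [hmod] at this
        rw [sub_add_cancel, mul_comm, this]
      have hz : isZeroAt Q (zpos P r / k - d) := by
        rw [h, ← hx]; exact ⟨r, rfl⟩
      obtain ⟨n, hn⟩ := hz
      refine ⟨n, ?_, by rw [hn]; exact hx.symm⟩
      by_contra hnM
      have h1 := hM n (by omega)
      have h2 : zpos Q n = -n - 1 := by simp [zpos, h1]
      have h3 := zpos_lt P hr
      rw [hx, ← hn, hzR] at h3
      have h4 : (zpos Q n + d) * k ≤ (-M - 1 + d) * k :=
        mul_le_mul_of_nonneg_right (by omega) hk.le
      have h5 : (-(M:ℤ) - 1 + d) * k = - ((M + 1 - d) * k) := by ring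
      omega
    · rintro ⟨n, hn, rfl⟩
      obtain ⟨r, hr⟩ := (h (zpos Q n)).1 ⟨n, rfl⟩
      refine ⟨r, ⟨?_, ?_⟩, hr⟩
      · by_contra hrR
        have h3 : zpos P r ≤ zpos P R := by
          rcases eq_or_lt_of_le (not_lt.1 hrR) with h | h
          · rw [h]
          · exact (zpos_lt P h).le
        rw [hr, hzR] at h3
        have h2 : zpos Q n ≥ -n - 1 := by unfold zpos; omega
        have h4 : (-M + d) * k ≤ (zpos Q n + d) * k :=
          mul_le_mul_of_nonneg_right (by omega) hk.le
        have h5 : (-(M:ℤ) + d) * k = - ((M + 1 - d) * k) + k := by ring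
        omega
      · rw [hr, Int.add_mul_emod_self_right]
        exact Int.emod_eq_of_lt (by omega) (by omega)
  have hc := congrArg Finset.card himg
  rw [Finset.card_image_of_injective _ (fun a b hab => zpos_inj P hab),
    Finset.card_image_of_injective, Finset.card_range] at hc
  · exact hc
  · intro a b hab
    simp only at hab
    apply zpos_inj Q
    have : (zpos Q a + d) * k = (zpos Q b + d) * k := by omega
    have := mul_right_cancel₀ hk.ne' this
    omega

lemma zpos_empty (n : ℕ) : zpos Partition.empty n = -n - 1 := by
  simp [zpos, Partition.empty]

lemma shift_zero {N k : ℕ} {P Q : Partition} (hP : P.parts N = 0) (w : Equiv.Perm (Fin N))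
    (hw : Valid k P w) (i : ℕ) (hi : i < k) (d : ℤ)
    (h : ∀ j : ℤ, isZeroAt Q j ↔ isZeroAt P ((i : ℤ) + (j + d) * (k : ℤ))) : d = 0 := by
  have hk : (0 : ℤ) < k := by omega
  have hR : ∀ R, N ≤ R → ∑ r ∈ Finset.range R, (if zpos P r % (k : ℤ) = i then 1 else 0) =
      ∑ r ∈ Finset.range R, (if zpos Partition.empty r % (k : ℤ) = i then 1 else 0) := by
    intro R hNR
    induction R, hNR using Nat.le_induction with
    | base =>
      rw [Finset.sum_range, Finset.sum_range, ← Equiv.sum_comp w (fun r : Fin N =>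
        (if zpos Partition.empty r % (k : ℤ) = i then 1 else 0))]
      apply Finset.sum_congr rfl
      intro r _
      obtain ⟨c, hc⟩ := hw r
      have : zpos P r % (k : ℤ) = zpos Partition.empty (w r) % (k : ℤ) := by
        rw [hc, Int.add_mul_emod_self_left, zpos_empty]
        congr 1; ring
      rw [this]
    | succ R hNR ih =>
      rw [Finset.sum_range_succ, Finset.sum_range_succ, ih]
      have : zpos P R = zpos Partition.empty R := by
        have := P.antitone hNR
        rw [zpos_empty, zpos]; omega
      rw [this]
  obtain ⟨M0, hM0⟩ := Q.eventually_zero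
  set M := M0 + N + d.natAbs + 1 with hM
  obtain ⟨M', hM'⟩ : ∃ M' : ℕ, (M' : ℤ) = M - d := ⟨(M - d).toNat, by omega⟩
  have hbig : (N : ℤ) + 1 + i ≤ (M + 1 - d) * k := by
    have : ((N : ℤ) + 2) * k ≤ (M + 1 - d) * k := mul_le_mul_of_nonneg_right (by omega) hk.le
    have h2 : ((N : ℤ) + 2) * k = N * k + 2 * k := by ring
    have h3 : (N : ℤ) * 1 ≤ N * k := mul_le_mul_of_nonneg_left (by omega) (by omega)
    omega
  obtain ⟨R, hRR⟩ : ∃ R : ℕ, (R : ℤ) + 1 + i = (M + 1 - d) * k :=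
    ⟨((M + 1 - d) * k - 1 - i).toNat, by omega⟩
  have hNR : N ≤ R := by omega
  have c1 := count_class i hi d h M R (fun n hn => hM0 n (by omega))
    (by have := P.antitone hNR; omega) hRR
  have c2 := count_class (P := Partition.empty) (Q := Partition.empty) i hi 0 (by
    intro j
    have hem : ∀ x : ℤ, isZeroAt Partition.empty x ↔ x < 0 := by
      intro x
      constructor
      · rintro ⟨n, rfl⟩; rw [zpos_empty]; omega
      · intro hx; exact ⟨(-x - 1).toNat, by rw [zpos_empty]; omega⟩
    rw [hem, hem, add_zero]
    constructor
    · intro hj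
      have : j * k ≤ (-1) * k := mul_le_mul_of_nonneg_right (by omega) hk.le
      omega
    · intro hj
      by_contra hj'
      have : 0 ≤ j * (k : ℤ) := mul_nonneg (by omega) hk.le
      omega) M' R (fun n _ => rfl) rfl (by rw [hRR, hM']; ring)
  rw [hR R hNR, c2] at c1
  omega

lemma case_one {N k : ℕ} (hk : 0 < k) {P : Partition} (hP : P.parts N = 0)
    (w w' : Equiv.Perm (Fin N)) (hw : Valid k P w) (hw' : Valid k P w')
    (Q : Fin k → Partition) (hQ : IsKQuotient k P Q) (h1 : ∀ i, (Q i).parts 1 = 0) : w' = w := by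
  have hkz : (0 : ℤ) < k := by omega
  let gp : ℕ → ℤ := fun r => min (zpos P r) (zpos P r % k - k)
  have hneg : ∀ r, gp r < 0 := by
    intro r
    have := Int.emod_lt_of_pos (zpos P r) hkz
    simp only [gp]; omega
  have hle : ∀ (u : Equiv.Perm (Fin N)), Valid k P u → ∀ r : Fin N, -1 - (u r : ℤ) ≤ gp r := by
    intro u hu r
    obtain ⟨c, hc⟩ := hu r
    have hc0 : (0 : ℤ) ≤ k * c := by positivity
    have e1 : zpos P r % k = (-1 - (u r : ℤ)) % k := by
      rw [hc, Int.add_mul_emod_self_left]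
    have e2 := Int.emod_add_mul_ediv (-1 - (u r : ℤ)) k
    have e3 : (-1 - (u r : ℤ)) / k < 0 := Int.ediv_neg_of_neg_of_pos (by omega) hkz
    have e4 : (k : ℤ) * ((-1 - (u r : ℤ)) / k) ≤ k * (-1) :=
      mul_le_mul_of_nonneg_left (by omega) hkz.le
    simp only [gp]
    rw [e1]
    omega
  have hinj : ∀ r s : ℕ, r < s → gp r ≠ gp s := by
    intro r s hrs heq
    have hmod : ∀ r, gp r % k = zpos P r % k := by
      intro r
      simp only [gp]
      rcases min_choice (zpos P r) (zpos P r % k - k) with h | h <;> rw [h]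
      simp
    have hrs' : zpos P r % k = zpos P s % k := by rw [← hmod, ← hmod, heq]
    have hlt := zpos_lt P hrs
    have i0 := Int.emod_nonneg (zpos P s) hkz.ne'
    have i1 := Int.emod_lt_of_pos (zpos P s) hkz
    obtain ⟨i, hi⟩ : ∃ i : ℕ, (i : ℤ) = zpos P s % k := ⟨(zpos P s % k).toNat, by omega⟩
    obtain ⟨d, hd⟩ := hQ ⟨i, by omega⟩
    simp only at hd
    have hd0 := shift_zero hP w hw i (by omega) d hd
    subst hd0
    simp only [add_zero] at hd
    have er := Int.emod_add_mul_ediv (zpos P r) k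
    have es := Int.emod_add_mul_ediv (zpos P s) k
    rw [hrs', ← hi, mul_comm] at er
    rw [← hi, mul_comm] at es
    obtain ⟨a, ha⟩ := (hd (zpos P r / k)).2 ⟨r, er.symm⟩
    obtain ⟨b, hb⟩ := (hd (zpos P s / k)).2 ⟨s, es.symm⟩
    have hjlt : zpos P s / k < zpos P r / k := by
      by_contra hh
      have := mul_le_mul_of_nonneg_right (not_lt.1 hh) hkz.le
      omega
    have hb1 : 1 ≤ b := by
      by_contra hb0
      have : b = 0 := by omega
      subst this
      rcases Nat.eq_zero_or_pos a with h | h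
      · subst h; omega
      · have := zpos_lt (Q ⟨i, by omega⟩) h; omega
    have hpb := (Q ⟨i, by omega⟩).antitone hb1
    rw [h1] at hpb
    have hb2 : zpos P s / k ≤ -2 := by
      rw [← hb]; unfold zpos; omega
    have := mul_le_mul_of_nonneg_right hb2 hkz.le
    simp only [gp] at heq
    omega
  let G : Fin N → Fin N := fun r => ⟨(-1 - gp r).toNat, by
    have := hle w hw r
    have := (w r).2
    have := hneg r
    omega⟩
  have hG : Function.Injective G := by
    intro r s hrs
    have h2 := congrArg Fin.val hrs
    simp only [G] at h2
    have := hneg r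
    have := hneg s
    rcases lt_trichotomy (r : ℕ) s with h | h | h
    · have := hinj r s h; omega
    · exact Fin.ext h
    · have := hinj s r h; omega
  have hGb : Function.Bijective G := Finite.injective_iff_bijective.1 hG
  have huniq : ∀ u : Equiv.Perm (Fin N), Valid k P u → ∀ r, G r = u r := by
    intro u hu
    have hsum : ∑ r, (G r : ℕ) = ∑ r, (u r : ℕ) := by
      rw [Equiv.sum_comp u (fun r => (r : ℕ))]
      exact (Equiv.ofBijective G hGb).sum_comp (fun r => (r : ℕ))
    have hl : ∀ r ∈ Finset.univ, (G r : ℕ) ≤ u r := by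
      intro r _
      have := hle u hu r
      have := hneg r
      simp only [G]; omega
    intro r
    exact Fin.ext ((Finset.sum_eq_sum_iff_of_le hl).1 hsum r (Finset.mem_univ r))
  ext r
  rw [← huniq w hw, ← huniq w' hw']

lemma case_two {N k : ℕ} (hk : 0 < k) {P : Partition} (hP : P.parts N = 0)
    (w : Equiv.Perm (Fin N)) (hw : Valid k P w)
    (Q : Fin k → Partition) (hQ : IsKQuotient k P Q) (i : Fin k) (h1 : 0 < (Q i).parts 1) :
    (MM N k P).det = 0 := by
  have hkz : (0 : ℤ) < k := by omega
  obtain ⟨d, hd⟩ := hQ i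
  have hd0 := shift_zero hP w hw i i.2 d hd
  subst hd0
  simp only [add_zero] at hd
  obtain ⟨r0, hr0⟩ := (hd _).1 ⟨0, rfl⟩
  obtain ⟨r1, hr1⟩ := (hd _).1 ⟨1, rfl⟩
  have z01 := zpos_lt (Q i) (show 0 < 1 by omega)
  have z1 : -1 ≤ zpos (Q i) 1 := by unfold zpos; push_cast; omega
  have b0 : 0 ≤ zpos (Q i) 0 * k := mul_nonneg (by omega) hkz.le
  have b1 : (-1) * (k : ℤ) ≤ zpos (Q i) 1 * k := mul_le_mul_of_nonneg_right (by omega) hkz.le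
  have hi := i.2
  -- columns of residue class i
  have hcol : ∀ j : ℕ, (-1 - (j : ℤ)) % k = i → -1 - (j : ℤ) ≤ i - k := by
    intro j hj
    have e2 := Int.emod_add_mul_ediv (-1 - (j : ℤ)) k
    have e3 : (-1 - (j : ℤ)) / k < 0 := Int.ediv_neg_of_neg_of_pos (by omega) hkz
    have e4 : (k : ℤ) * ((-1 - (j : ℤ)) / k) ≤ k * (-1) :=
      mul_le_mul_of_nonneg_left (by omega) hkz.le
    omega
  have hm : ∀ {r : ℕ} {n : ℕ}, zpos P r = (i : ℕ) + zpos (Q i) n * k → zpos P r % k = (i : ℕ) := by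
    intro r n h
    rw [h, Int.add_mul_emod_self_right]
    exact Int.emod_eq_of_lt (by omega) (by omega)
  have hr0N : r0 < N := by
    by_contra hh
    have := P.antitone (not_lt.1 hh)
    unfold zpos at hr0 b0
    omega
  have hr1N : r1 < N := by
    by_contra hh
    have h3 := P.antitone (not_lt.1 hh)
    have h4 : zpos P r1 = - r1 - 1 := by unfold zpos; omega
    obtain ⟨c, hc⟩ := hw ⟨r0, hr0N⟩
    simp only at hc
    have h5 := hm hr0
    rw [hc, Int.add_mul_emod_self_left] at h5
    have h6 := hcol _ h5
    have := (w ⟨r0, hr0N⟩).2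
    omega
  have hne : (⟨r0, hr0N⟩ : Fin N) ≠ ⟨r1, hr1N⟩ := by
    intro h
    have h' : r0 = r1 := congrArg Fin.val h
    rw [h', hr1] at hr0
    have : zpos (Q i) 1 * k = zpos (Q i) 0 * (k : ℤ) := by omega
    have := mul_right_cancel₀ hkz.ne' this
    omega
  have hent : ∀ (r : Fin N) (j : Fin N), zpos P r % k = (i : ℕ) → ((i : ℕ) : ℤ) - k ≤ zpos P r →
      ((∃ c : ℕ, zpos P r = -1 - (j : ℤ) + (k : ℤ) * c) ↔ (-1 - (j : ℤ)) % k = (i : ℕ)) := by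
    intro r j h5 h6
    constructor
    · rintro ⟨c, hc⟩
      rw [hc, Int.add_mul_emod_self_left] at h5
      exact h5
    · intro h7
      have h8 := hcol j h7
      have h9 : (k : ℤ) ∣ zpos P r - (-1 - (j : ℤ)) :=
        Int.dvd_of_emod_eq_zero (Int.emod_eq_emod_iff_emod_sub_eq_zero.1 (h5.trans h7.symm))
      obtain ⟨c, hc⟩ := h9
      have hc0 : 0 ≤ c := by
        by_contra hneg
        have : (k : ℤ) * c < 0 := mul_neg_of_pos_of_neg hkz (by omega)
        omega
      refine ⟨c.toNat, ?_⟩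
      rw [Int.toNat_of_nonneg hc0, ← hc]; ring
  apply Matrix.det_zero_of_row_eq hne
  funext j
  have e : (del N j ≤ beta N P ⟨r0, hr0N⟩ ∧ k ∣ beta N P ⟨r0, hr0N⟩ - del N j) ↔
      (del N j ≤ beta N P ⟨r1, hr1N⟩ ∧ k ∣ beta N P ⟨r1, hr1N⟩ - del N j) := by
    rw [entry_iff, entry_iff, hent ⟨r0, hr0N⟩ j (hm hr0) (by simp only; omega),
      hent ⟨r1, hr1N⟩ j (hm hr1) (by simp only; omega)]
  unfold MM
  exact if_congr e rfl rfl

/-- let `λ ⊢ kp` have empty `k`-core and `k`-quotient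
`(λ₁,…,λ_k)`. If each `λᵢ` is empty or has exactly one part, then
`Σ_{μ ⊢ p} (1/z_μ)·χ^λ_{kμ} = sign(π_λ)`; if some `λᵢ` has at least two nonzero
parts, the sum vanishes. -/
theorem partition_sum_eq_sign_or_zero (k p : ℕ) (hk : 2 ≤ k) (P : Partition)
    (hP : P.size = k * p) (hcore : IsKCore k P Partition.empty)
    (Q : Fin k → Partition) (hQ : IsKQuotient k P Q)
    (T₀ : RHT P (List.replicate p k)) (π : Equiv.Perm (Fin P.length))
    (hπ : IsZeroPerm T₀ π) :
    ((∀ i : Fin k, (Q i).parts 1 = 0) →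
      ∑ μ : Nat.Partition p, (1 / (zpart μ.parts : ℚ)) *
        (chi P (μ.parts.map fun x => k * x) : ℚ) =
          ((Equiv.Perm.sign π : ℤ) : ℚ)) ∧
    ((∃ i : Fin k, 0 < (Q i).parts 1) →
      ∑ μ : Nat.Partition p, (1 / (zpart μ.parts : ℚ)) *
        (chi P (μ.parts.map fun x => k * x) : ℚ) = 0) := by
  classical
  have hk0 : 0 < k := by omega
  have hPN := parts_length P
  obtain ⟨w, hsign, hw⟩ := zeroPerm_valid hk0 T₀ π hπ
  constructor
  · intro h1
    rw [sum_formula P.length k p hk0 P hPN hP, Finset.sum_eq_single w]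
    · rw [if_pos, hsign, mul_one]
      intro i
      rw [entry_iff]
      exact hw i
    · intro w' _ hne
      rw [if_neg, mul_zero]
      intro h
      apply hne
      refine case_one hk0 hPN w w' hw (fun r => ?_) Q hQ h1
      rw [← entry_iff]
      exact h r
    · simp
  · rintro ⟨i, hi⟩
    rw [sum_formula_det P.length k p hk0 P hPN hP]
    exact case_two hk0 hPN w hw Q hQ i hi

end RimHookPaper
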